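/- Let a¹ = (1, −1), a² = (1, 1) in ℝ², let X = {x⁰, x¹, x², ...} ⊂ ℝ² where x⁰ = (2, 2/3), x¹ = (2/3, −2/3), x² = (0, 0), and x^{3+k} = (Σ_{j=0}^{k} 2^{−j}, Σ_{j=0}^{k} (−1)^j 2^{−j}) for k = 0, 1, 2, .... Let (cₙ)_{n≥1} be a sequence with cₙ > 0, cₙ → 0 and Σ_{n=1}^∞ cₙ = ∞, and let f₀ : X → ℝ be defined by f₀(x^{2n}) = 0 and f₀(x^{2n+1}) = c_{n+1} for n = 0, 1, 2, .... Then there do not exist functions g₁, g₂ : ℝ → ℝ with f₀(x) = g₁(a¹·x) + g₂(a²·x) for all x ∈ X such that both summands g₁(a¹·x) and g₂(a²·x) are bounded on X; in particular, f₀ ∉ R_b(X). -/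

import Mathlib

open Matrix Set Filter Topology

/-- `p 0, p 1, ..., p (m-1)` is a (finite) path whose first difference is
perpendicular to `a1`, with differences alternately perpendicular to `a1` and `a2`,
and all differences nonzero. -/
def IsPathFrom {n : ℕ} (a1 a2 : Fin n → ℝ) (m : ℕ) (p : ℕ → Fin n → ℝ) : Prop :=
  ∀ i, i + 1 < m →
    p (i + 1) - p i ≠ 0 ∧
    (i % 2 = 0 → a1 ⬝ᵥ (p (i + 1) - p i) = 0) ∧
    (i % 2 = 1 → a2 ⬝ᵥ (p (i + 1) - p i) = 0)

/-- A finite path with respect to the directions `a1` and `a2` (the alternation may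
start with either direction). -/
def IsPath {n : ℕ} (a1 a2 : Fin n → ℝ) (m : ℕ) (p : ℕ → Fin n → ℝ) : Prop :=
  IsPathFrom a1 a2 m p ∨ IsPathFrom a2 a1 m p

/-- A finite path of length `m` (i.e. with `m` points) all of whose points lie in `X`. -/
def IsPathIn {n : ℕ} (a1 a2 : Fin n → ℝ) (X : Set (Fin n → ℝ)) (m : ℕ)
    (p : ℕ → Fin n → ℝ) : Prop :=
  1 ≤ m ∧ IsPath a1 a2 m p ∧ ∀ i < m, p i ∈ X

/-- An irreducible path in `X`: no strictly shorter path in `X` joins its endpoints. -/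
def IsIrreduciblePathIn {n : ℕ} (a1 a2 : Fin n → ℝ) (X : Set (Fin n → ℝ)) (m : ℕ)
    (p : ℕ → Fin n → ℝ) : Prop :=
  IsPathIn a1 a2 X m p ∧
  ¬ ∃ l q, l < m ∧ IsPathIn a1 a2 X l q ∧ q 0 = p 0 ∧ q (l - 1) = p (m - 1)

/-- An infinite path whose first difference is perpendicular to `a1`. -/
def IsInfPathFrom {n : ℕ} (a1 a2 : Fin n → ℝ) (p : ℕ → Fin n → ℝ) : Prop :=
  ∀ i,
    p (i + 1) - p i ≠ 0 ∧
    (i % 2 = 0 → a1 ⬝ᵥ (p (i + 1) - p i) = 0) ∧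
    (i % 2 = 1 → a2 ⬝ᵥ (p (i + 1) - p i) = 0)

/-- An infinite path with respect to the directions `a1` and `a2`. -/
def IsInfPath {n : ℕ} (a1 a2 : Fin n → ℝ) (p : ℕ → Fin n → ℝ) : Prop :=
  IsInfPathFrom a1 a2 p ∨ IsInfPathFrom a2 a1 p

/-- `f` is bounded on `X`. -/
def BddOn {n : ℕ} (f : (Fin n → ℝ) → ℝ) (X : Set (Fin n → ℝ)) : Prop :=
  ∃ M, ∀ x ∈ X, |f x| ≤ M

/-- `R_a(X)`: sums of two ridge functions with directions `a1, a2` that are bounded on `X`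
(the individual summands need not be bounded). -/
def RaSet {n : ℕ} (a1 a2 : Fin n → ℝ) (X : Set (Fin n → ℝ)) : Set ((Fin n → ℝ) → ℝ) :=
  {f | (∃ g1 g2 : ℝ → ℝ, ∀ x ∈ X, f x = g1 (a1 ⬝ᵥ x) + g2 (a2 ⬝ᵥ x)) ∧ BddOn f X}

/-- `R_b(X)`: sums of two ridge functions with directions `a1, a2` whose summands are
bounded on `X`. -/
def RbSet {n : ℕ} (a1 a2 : Fin n → ℝ) (X : Set (Fin n → ℝ)) : Set ((Fin n → ℝ) → ℝ) :=
  {f | ∃ g1 g2 : ℝ → ℝ, (∀ x ∈ X, f x = g1 (a1 ⬝ᵥ x) + g2 (a2 ⬝ᵥ x)) ∧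
    BddOn (fun x => g1 (a1 ⬝ᵥ x)) X ∧ BddOn (fun x => g2 (a2 ⬝ᵥ x)) X}

/-- `R_c(X)`: sums of two ridge functions with directions `a1, a2` whose summands are
continuous on `X`. -/
def RcSet {n : ℕ} (a1 a2 : Fin n → ℝ) (X : Set (Fin n → ℝ)) : Set ((Fin n → ℝ) → ℝ) :=
  {f | ∃ g1 g2 : ℝ → ℝ, (∀ x ∈ X, f x = g1 (a1 ⬝ᵥ x) + g2 (a2 ⬝ᵥ x)) ∧
    ContinuousOn (fun x => g1 (a1 ⬝ᵥ x)) X ∧ ContinuousOn (fun x => g2 (a2 ⬝ᵥ x)) X}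

/-- The uniform (sup) distance of `f` and `g` over `X`. -/
noncomputable def supDist {n : ℕ} (X : Set (Fin n → ℝ)) (f g : (Fin n → ℝ) → ℝ) : ℝ :=
  sSup {r | ∃ x ∈ X, r = |f x - g x|}

/-- `f` has an extremal element (best approximation in the sup norm over `X`) in `S`. -/
def HasExtremalIn {n : ℕ} (X : Set (Fin n → ℝ)) (f : (Fin n → ℝ) → ℝ)
    (S : Set ((Fin n → ℝ) → ℝ)) : Prop :=
  ∃ g0 ∈ S, supDist X f g0 = sInf ((supDist X f) '' S)

/-- The orbit of `t`: all points of `X` joined to `t` by a common path lying in `X`. -/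
def Orbit {n : ℕ} (a1 a2 : Fin n → ℝ) (X : Set (Fin n → ℝ)) (t : Fin n → ℝ) :
    Set (Fin n → ℝ) :=
  {y | ∃ m p, IsPathIn a1 a2 X m p ∧ (∃ i < m, p i = t) ∧ (∃ j < m, p j = y)}

/-- The variation of `f` on a set `Y`. -/
noncomputable def varOn {n : ℕ} (f : (Fin n → ℝ) → ℝ) (Y : Set (Fin n → ℝ)) : ℝ :=
  sSup {r | ∃ x ∈ Y, ∃ y ∈ Y, r = |f x - f y|}
/-- The sequence of points `x⁰, x¹, x², …` of the example:
`x⁰ = (2, 2/3)`, `x¹ = (2/3, −2/3)`, `x² = (0,0)` and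
`x^{3+k} = (∑_{j=0}^k 2^{−j}, ∑_{j=0}^k (−1)^j 2^{−j})`. -/
noncomputable def xseq : ℕ → (Fin 2 → ℝ)
  | 0 => ![2, 2 / 3]
  | 1 => ![2 / 3, -(2 / 3)]
  | 2 => ![0, 0]
  | (k + 3) => ![∑ j ∈ Finset.range (k + 1), (1 / 2 : ℝ) ^ j,
                 ∑ j ∈ Finset.range (k + 1), (-(1 / 2) : ℝ) ^ j]

theorem xseq_a1 (n : ℕ) : ![(1 : ℝ), -1] ⬝ᵥ xseq (2 * n + 1) = ![(1 : ℝ), -1] ⬝ᵥ xseq (2 * n) := by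
  match n with
  | 0 => simp [xseq]; norm_num
  | 1 => simp [xseq]
  | k + 2 =>
    have e1 : 2 * (k + 2) + 1 = (2 * k + 1 + 1) + 3 := by ring
    have e2 : 2 * (k + 2) = (2 * k + 1) + 3 := by ring
    rw [e1, e2]
    have h : (-(1 / 2) : ℝ) ^ (2 * k + 1 + 1) = (1 / 2 : ℝ) ^ (2 * k + 1 + 1) :=
      Even.neg_pow ⟨k + 1, by ring⟩ _
    simp only [xseq, dotProduct, Fin.sum_univ_two, Matrix.cons_val_zero, Matrix.cons_val_one]
    rw [Finset.sum_range_succ _ (2 * k + 1 + 1), Finset.sum_range_succ _ (2 * k + 1 + 1), h]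
    ring

theorem xseq_a2 (n : ℕ) :
    ![(1 : ℝ), 1] ⬝ᵥ xseq (2 * (n + 1)) = ![(1 : ℝ), 1] ⬝ᵥ xseq (2 * n + 1) := by
  match n with
  | 0 => simp [xseq]
  | k + 1 =>
    have e1 : 2 * (k + 1 + 1) = (2 * k + 1) + 3 := by ring
    have e2 : 2 * (k + 1) + 1 = (2 * k) + 3 := by ring
    rw [e1, e2]
    have h : (-(1 / 2) : ℝ) ^ (2 * k + 1) = -(1 / 2 : ℝ) ^ (2 * k + 1) :=
      Odd.neg_pow ⟨k, by ring⟩ _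
    simp only [xseq, dotProduct, Fin.sum_univ_two, Matrix.cons_val_zero, Matrix.cons_val_one]
    rw [Finset.sum_range_succ _ (2 * k + 1), Finset.sum_range_succ _ (2 * k + 1), h]
    ring

/-- for a sequence `cₙ > 0` with `cₙ → 0` and `∑ cₙ = ∞`, the
function `f₀` with `f₀(x^{2n}) = 0`, `f₀(x^{2n+1}) = c_{n+1}` admits no
representation `g₁(a¹·x) + g₂(a²·x)` on `X` with both summands bounded on `X`;
in particular `f₀ ∉ R_b(X)`. -/
theorem f0_not_mem_Rb
    (c : ℕ → ℝ) (hpos : ∀ m : ℕ, 1 ≤ m → 0 < c m)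
    (hlim : Filter.Tendsto c Filter.atTop (nhds 0))
    (hdiv : ¬ Summable fun m => c (m + 1))
    (f0 : (Fin 2 → ℝ) → ℝ)
    (hf0even : ∀ m : ℕ, f0 (xseq (2 * m)) = 0)
    (hf0odd : ∀ m : ℕ, f0 (xseq (2 * m + 1)) = c (m + 1)) :
    f0 ∉ RbSet ![(1 : ℝ), -1] ![(1 : ℝ), 1] (Set.range xseq) := by
  rintro ⟨g1, g2, hg, -, M, hM⟩
  apply hdiv
  have key : ∀ n, ∑ i ∈ Finset.range n, c (i + 1) =
      g2 (![(1 : ℝ), 1] ⬝ᵥ xseq (2 * n)) - g2 (![(1 : ℝ), 1] ⬝ᵥ xseq (2 * 0)) := by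
    intro n
    rw [← Finset.sum_range_sub (fun n => g2 (![(1 : ℝ), 1] ⬝ᵥ xseq (2 * n)))]
    refine Finset.sum_congr rfl fun i _ => ?_
    have h1 := hg _ ⟨2 * i, rfl⟩
    have h2 := hg _ ⟨2 * i + 1, rfl⟩
    rw [hf0even] at h1
    rw [hf0odd, xseq_a1, ← xseq_a2] at h2
    linarith
  refine summable_of_sum_range_le (c := 2 * M) (fun n => (hpos _ (by omega)).le) fun n => ?_
  rw [key]
  have h1 := abs_le.1 (hM _ ⟨2 * n, rfl⟩)
  have h2 := abs_le.1 (hM _ ⟨2 * 0, rfl⟩)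
  linarith [h1.2, h2.1]
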